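/- Let θ : ℝⁿ → [−∞,+∞] be a symmetric, lower semicontinuous function that is subdifferentially regular at every point of its domain, and let X ∈ Sⁿ be such that θ(λ(X)) is finite and ∂θ(λ(X)) ≠ ∅. Then for every H ∈ Sⁿ, the subderivative of the spectral function g = θ∘λ satisfies d(θ∘λ)(X)(H) = dθ(λ(X))(λ'(X;H)). -/

import Mathlib

open Filter Topology Matrix

noncomputable section

namespace SpecPaper

/-! ## Generic variational analysis definitions over a topological real vector space -/

variable {E : Type*}

section Generic

variable [AddCommGroup E] [Module ℝ E] [TopologicalSpace E]

/-- `f x` is finite (neither `+∞` nor `-∞`). -/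
def IsFiniteAt (f : E → EReal) (x : E) : Prop :=
  f x ≠ ⊤ ∧ f x ≠ ⊥

/-- The norm induced by a given inner product. -/
noncomputable def nrm (ip : E → E → ℝ) (x : E) : ℝ :=
  Real.sqrt (ip x x)

/-- The subderivative `df(x)(w)`. -/
noncomputable def subderiv (f : E → EReal) (x w : E) : EReal :=
  Filter.liminf (fun p : ℝ × E => (((p.1)⁻¹ : ℝ) : EReal) * (f (x + p.1 • p.2) - f x))
    ((nhdsWithin (0 : ℝ) (Set.Ioi 0)) ×ˢ nhds w)

/-- The second-order difference quotient `Δ²ₜ f(x,v)(w)`. -/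
noncomputable def sdq2 (ip : E → E → ℝ) (f : E → EReal) (x v : E) (t : ℝ) (w : E) : EReal :=
  (((2 / t ^ 2) : ℝ) : EReal) * (f (x + t • w) - f x - ((t * ip v w : ℝ) : EReal))

/-- The second subderivative `d²f(x,v)(w)`. -/
noncomputable def subderiv2 (ip : E → E → ℝ) (f : E → EReal) (x v w : E) : EReal :=
  Filter.liminf (fun p : ℝ × E => sdq2 ip f x v p.1 p.2)
    ((nhdsWithin (0 : ℝ) (Set.Ioi 0)) ×ˢ nhds w)

/-- Twice epi-differentiability of `f` at `x` for `v`. -/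
def TwiceEpiDiff (ip : E → E → ℝ) (f : E → EReal) (x v : E) : Prop :=
  IsFiniteAt f x ∧
    ∀ t : ℕ → ℝ, (∀ k, 0 < t k) → Tendsto t atTop (nhds 0) →
      ∀ w : E, ∃ ws : ℕ → E, Tendsto ws atTop (nhds w) ∧
        Tendsto (fun k => sdq2 ip f x v (t k) (ws k)) atTop (nhds (subderiv2 ip f x v w))

/-- `v` is a regular subgradient of `f` at `x`. -/
def RegSubgrad (ip : E → E → ℝ) (f : E → EReal) (x v : E) : Prop :=
  IsFiniteAt f x ∧
    (0 : EReal) ≤ Filter.liminf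
      (fun y : E =>
        (((nrm ip (y - x))⁻¹ : ℝ) : EReal) * (f y - f x - ((ip v (y - x) : ℝ) : EReal)))
      (nhdsWithin x {x}ᶜ)

/-- `v` is a (limiting) subgradient of `f` at `x`. -/
def LimSubgrad (ip : E → E → ℝ) (f : E → EReal) (x v : E) : Prop :=
  ∃ xs vs : ℕ → E, (∀ k, RegSubgrad ip f (xs k) (vs k)) ∧
    Tendsto xs atTop (nhds x) ∧ Tendsto vs atTop (nhds v) ∧
    Tendsto (fun k => f (xs k)) atTop (nhds (f x))

/-- The tangent cone to `C` at `x`. -/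
def tangentCone (C : Set E) (x : E) : Set E :=
  {w | ∃ (t : ℕ → ℝ) (ws : ℕ → E), (∀ k, 0 < t k) ∧ Tendsto t atTop (nhds 0) ∧
    Tendsto ws atTop (nhds w) ∧ ∀ k, x + t k • ws k ∈ C}

/-- The regular normal cone to `C` at `x`. -/
def regNormalCone (ip : E → E → ℝ) (C : Set E) (x : E) : Set E :=
  {v | ∀ w ∈ tangentCone C x, ip v w ≤ 0}

/-- The limiting normal cone to `C` at `x`. -/
def limNormalCone (ip : E → E → ℝ) (C : Set E) (x : E) : Set E :=
  {v | ∃ xs vs : ℕ → E, (∀ k, xs k ∈ C) ∧ (∀ k, vs k ∈ regNormalCone ip C (xs k)) ∧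
    Tendsto xs atTop (nhds x) ∧ Tendsto vs atTop (nhds v)}

/-- The critical cone `C_f(x,v)`. -/
def criticalCone (ip : E → E → ℝ) (f : E → EReal) (x v : E) : Set E :=
  {w | subderiv f x w = ((ip v w : ℝ) : EReal)}

/-- `f` is locally Lipschitz continuous at `x` relative to its domain. -/
def LocLipAtRelDom (ip : E → E → ℝ) (f : E → EReal) (x : E) : Prop :=
  IsFiniteAt f x ∧
    ∃ V ∈ nhds x, ∃ ℓ : ℝ, 0 ≤ ℓ ∧
      ∀ a ∈ V, ∀ b ∈ V, f a ≠ ⊤ → f b ≠ ⊤ →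
        f a ≠ ⊥ ∧ f b ≠ ⊥ ∧ |(f a).toReal - (f b).toReal| ≤ ℓ * nrm ip (a - b)

/-- `f` is locally Lipschitz continuous relative to its domain. -/
def LocLipRelDom (ip : E → E → ℝ) (f : E → EReal) : Prop :=
  ∀ x : E, f x ≠ ⊤ → LocLipAtRelDom ip f x

/-- `v` is a proximal subgradient of `f` at `x`. -/
def ProxSubgrad (ip : E → E → ℝ) (f : E → EReal) (x v : E) : Prop :=
  IsFiniteAt f x ∧
    ∃ r > (0 : ℝ), ∃ ε > (0 : ℝ), ∀ x' : E, nrm ip (x' - x) ≤ ε →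
      f x + ((ip v (x' - x) - r / 2 * ip (x' - x) (x' - x) : ℝ) : EReal) ≤ f x'

/-- `f` is prox-regular at `x` for `v`. -/
def ProxRegularAtFor (ip : E → E → ℝ) (f : E → EReal) (x v : E) : Prop :=
  IsFiniteAt f x ∧
    (∃ δ > (0 : ℝ), LowerSemicontinuousOn f {x' | nrm ip (x' - x) < δ}) ∧
    ∃ ε > (0 : ℝ), ∃ r : ℝ, 0 ≤ r ∧
      ∀ x₁ v₁ : E, LimSubgrad ip f x₁ v₁ → nrm ip (x₁ - x) < ε → nrm ip (v₁ - v) < ε →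
        f x₁ < f x + (ε : EReal) →
        ∀ x' : E, nrm ip (x' - x) < ε →
          f x₁ + ((ip v₁ (x' - x₁) - r / 2 * ip (x' - x₁) (x' - x₁) : ℝ) : EReal) ≤ f x'

/-- `f` is prox-regular at `x` (for every subgradient). -/
def ProxRegularAt (ip : E → E → ℝ) (f : E → EReal) (x : E) : Prop :=
  ∀ v : E, LimSubgrad ip f x v → ProxRegularAtFor ip f x v

/-- `f` is subdifferentially continuous at `x`. -/
def SubdiffContAt (ip : E → E → ℝ) (f : E → EReal) (x : E) : Prop :=
  ∀ v : E, LimSubgrad ip f x v →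
    ∀ xs vs : ℕ → E, (∀ k, LimSubgrad ip f (xs k) (vs k)) →
      Tendsto xs atTop (nhds x) → Tendsto vs atTop (nhds v) →
      Tendsto (fun k => f (xs k)) atTop (nhds (f x))

/-- `f` is prox-bounded. -/
def ProxBounded (ip : E → E → ℝ) (f : E → EReal) : Prop :=
  ∃ α c : ℝ, ∀ x : E, (c : EReal) ≤ f x + ((α * ip x x : ℝ) : EReal)

/-- The proximal mapping (as a set of minimizers). -/
def proxSet (ip : E → E → ℝ) (f : E → EReal) (γ : ℝ) (x : E) : Set E :=
  {w | ∀ w' : E,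
    f w + ((1 / (2 * γ) * ip (w - x) (w - x) : ℝ) : EReal) ≤
      f w' + ((1 / (2 * γ) * ip (w' - x) (w' - x) : ℝ) : EReal)}

/-- The proximal map of `f` with parameter `γ` is single-valued around `z` and the resulting
map is directionally differentiable at `z`. -/
def ProxSingleDirDiff (ip : E → E → ℝ) (f : E → EReal) (γ : ℝ) (z : E) : Prop :=
  ∃ V ∈ nhds z, ∃ P : E → E, (∀ u ∈ V, proxSet ip f γ u = {P u}) ∧
    ∀ h : E, ∃ L : E,
      Tendsto (fun t : ℝ => t⁻¹ • (P (z + t • h) - P z)) (nhdsWithin 0 (Set.Ioi 0)) (nhds L)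

/-- The parabolic difference quotient. -/
noncomputable def parabQuot (f : E → EReal) (x w : E) (t : ℝ) (z : E) : EReal :=
  (((2 / t ^ 2) : ℝ) : EReal) *
    (f (x + t • w + (t ^ 2 / 2) • z) - f x - ((t * (subderiv f x w).toReal : ℝ) : EReal))

/-- The parabolic subderivative `d²f(x)(w | z)`. -/
noncomputable def parabSubderiv (f : E → EReal) (x w z : E) : EReal :=
  Filter.liminf (fun p : ℝ × E => parabQuot f x w p.1 p.2)
    ((nhdsWithin (0 : ℝ) (Set.Ioi 0)) ×ˢ nhds z)

/-- `f` is parabolically epi-differentiable at `x` for `w`. -/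
def ParabEpiDiff (f : E → EReal) (x w : E) : Prop :=
  (∃ z : E, parabSubderiv f x w z < ⊤) ∧
    ∀ t : ℕ → ℝ, (∀ k, 0 < t k) → Tendsto t atTop (nhds 0) →
      ∀ z : E, ∃ zs : ℕ → E, Tendsto zs atTop (nhds z) ∧
        Tendsto (fun k => parabQuot f x w (t k) (zs k)) atTop (nhds (parabSubderiv f x w z))

/-- `φ` is a generalized quadratic form: its domain is a linear subspace and on the domain it is
given by a symmetric linear operator. -/
def IsGQF (ip : E → E → ℝ) (φ : E → EReal) : Prop :=
  (φ 0 ≠ ⊤) ∧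
  (∀ x y : E, φ x ≠ ⊤ → φ y ≠ ⊤ → φ (x + y) ≠ ⊤) ∧
  (∀ (c : ℝ) (x : E), φ x ≠ ⊤ → φ (c • x) ≠ ⊤) ∧
  ∃ L : E → E,
    (∀ x y : E, φ x ≠ ⊤ → φ y ≠ ⊤ → L (x + y) = L x + L y) ∧
    (∀ (c : ℝ) (x : E), φ x ≠ ⊤ → L (c • x) = c • L x) ∧
    (∀ x y : E, φ x ≠ ⊤ → φ y ≠ ⊤ → ip (L x) y = ip x (L y)) ∧
    (∀ x : E, φ x ≠ ⊤ → φ x = ((ip (L x) x : ℝ) : EReal))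

/-- `f` is generalized twice differentiable at `x` for `v`. -/
def GenTwiceDiff (ip : E → E → ℝ) (f : E → EReal) (x v : E) : Prop :=
  TwiceEpiDiff ip f x v ∧ IsGQF ip (subderiv2 ip f x v)

/-- Proto-differentiability of a set-valued map `F` at `x` for `y ∈ F x`. -/
def ProtoDiff (F : E → Set E) (x y : E) : Prop :=
  ∀ w η : E, (w, η) ∈ tangentCone {p : E × E | p.2 ∈ F p.1} (x, y) →
    ∀ t : ℕ → ℝ, (∀ k, 0 < t k) → Tendsto t atTop (nhds 0) →
      ∃ ws ηs : ℕ → E, Tendsto ws atTop (nhds w) ∧ Tendsto ηs atTop (nhds η) ∧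
        ∀ k, y + t k • ηs k ∈ F (x + t k • ws k)

/-- Relative interior of a set (interior relative to its affine hull). -/
def relInterior (C : Set E) : Set E :=
  {y | y ∈ C ∧ ∃ V ∈ nhds y, ∀ z ∈ V, z ∈ affineSpan ℝ C → z ∈ C}

/-- A polyhedral set: the intersection of finitely many closed half-spaces. -/
def IsPolyhedral (ip : E → E → ℝ) (C : Set E) : Prop :=
  ∃ (k : ℕ) (a : Fin k → E) (b : Fin k → ℝ), C = {x | ∀ j : Fin k, ip (a j) x ≤ b j}

/-- The subdifferential of a convex function. -/
def convexSubdiff (ip : E → E → ℝ) (f : E → EReal) (x : E) : Set E :=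
  {v | ∀ z : E, f x + ((ip v (z - x) : ℝ) : EReal) ≤ f z}

/-- The natural inner product on `E × ℝ`. -/
def ipProd (ip : E → E → ℝ) : E × ℝ → E × ℝ → ℝ :=
  fun p q => ip p.1 q.1 + p.2 * q.2

/-- The epigraph of `f`. -/
def epiSet (f : E → EReal) : Set (E × ℝ) :=
  {p | f p.1 ≤ (p.2 : EReal)}

/-- `f` is subdifferentially regular at `x`. -/
def SubdiffRegularAt (ip : E → E → ℝ) (f : E → EReal) (x : E) : Prop :=
  IsFiniteAt f x ∧
    regNormalCone (ipProd ip) (epiSet f) (x, (f x).toReal) =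
      limNormalCone (ipProd ip) (epiSet f) (x, (f x).toReal)

/-! Real-valued versions: semidifferentiability, gradients. -/

/-- `f` is semidifferentiable at `x`. -/
def SemiDiffAt (f : E → ℝ) (x : E) : Prop :=
  ∀ w : E, ∃ d : ℝ,
    Tendsto (fun p : ℝ × E => (p.1)⁻¹ * (f (x + p.1 • p.2) - f x))
      ((nhdsWithin (0 : ℝ) (Set.Ioi 0)) ×ˢ nhds w) (nhds d)

/-- The (real value of the) subderivative of a real-valued function. -/
noncomputable def dReal (f : E → ℝ) (x w : E) : ℝ :=
  (subderiv (fun y => ((f y : ℝ) : EReal)) x w).toReal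

/-- The second-order difference quotient built from the subderivative. -/
noncomputable def sdq2R (f : E → ℝ) (x : E) (t : ℝ) (w : E) : ℝ :=
  (2 / t ^ 2) * (f (x + t • w) - f x - t * dReal f x w)

/-- `f` is twice semidifferentiable at `x`. -/
def TwiceSemiDiffAt (f : E → ℝ) (x : E) : Prop :=
  SemiDiffAt f x ∧
    ∀ w : E, ∃ d : ℝ,
      Tendsto (fun p : ℝ × E => sdq2R f x p.1 p.2)
        ((nhdsWithin (0 : ℝ) (Set.Ioi 0)) ×ˢ nhds w) (nhds d)

/-- The second semiderivative `d²f(x)(w)` (the liminf; it is the full limit whenever `f` is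
twice semidifferentiable at `x`). -/
noncomputable def secondSemiDeriv (f : E → ℝ) (x w : E) : EReal :=
  Filter.liminf (fun p : ℝ × E => ((sdq2R f x p.1 p.2 : ℝ) : EReal))
    ((nhdsWithin (0 : ℝ) (Set.Ioi 0)) ×ˢ nhds w)

/-- `f` is (Fréchet) differentiable at `x` with gradient `g` (w.r.t. inner product `ip`). -/
def HasGradAt (ip : E → E → ℝ) (f : E → ℝ) (x g : E) : Prop :=
  Tendsto (fun y : E => (nrm ip (y - x))⁻¹ * (f y - f x - ip g (y - x)))
    (nhdsWithin x {x}ᶜ) (nhds 0)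

/-- `f` is locally Lipschitz continuous around `x`. -/
def LocLipAt (ip : E → E → ℝ) (f : E → ℝ) (x : E) : Prop :=
  ∃ V ∈ nhds x, ∃ ℓ : ℝ, 0 ≤ ℓ ∧ ∀ a ∈ V, ∀ b ∈ V, |f a - f b| ≤ ℓ * nrm ip (a - b)

/-- `f` is twice differentiable at `x` with gradient map `G` near `x` and second derivative
(the derivative of `G` at `x`) given by the linear map `Dxx`. -/
def HasSecondDerivAt (ip : E → E → ℝ) (f : E → EReal) (x : E) (G : E → E) (Dxx : E → E) :
    Prop :=
  ∃ V ∈ nhds x, ∃ fr : E → ℝ,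
    (∀ z ∈ V, f z = ((fr z : ℝ) : EReal)) ∧
    (∀ z ∈ V, HasGradAt ip fr z (G z)) ∧
    IsLinearMap ℝ Dxx ∧
    Tendsto (fun z : E => (nrm ip (z - x))⁻¹ • (G z - G x - Dxx (z - x)))
      (nhdsWithin x {x}ᶜ) (nhds 0)

/-- `f` is twice differentiable at `x`. -/
def TwiceDiffAt (ip : E → E → ℝ) (f : E → EReal) (x : E) : Prop :=
  ∃ G Dxx : E → E, HasSecondDerivAt ip f x G Dxx

end Generic

/-! ## Eigenvalues and spectral machinery -/

open scoped Classical in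
/-- The eigenvalues of a real symmetric matrix, arranged in nonincreasing order
(junk value `0` if the matrix is not symmetric). -/
noncomputable def eigval {n : ℕ} (X : Matrix (Fin n) (Fin n) ℝ) : Fin n → ℝ :=
  if h : X.IsHermitian then
    fun i => h.eigenvalues (Tuple.sort (fun j => -h.eigenvalues j) i)
  else 0

/-- `Oⁿ(X)`: orthogonal matrices realizing the ordered spectral decomposition of `X`. -/
def eigOrth {n : ℕ} (X : Matrix (Fin n) (Fin n) ℝ) : Set (Matrix (Fin n) (Fin n) ℝ) :=
  {U | U * Uᵀ = 1 ∧ X = U * Matrix.diagonal (eigval X) * Uᵀ}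

open scoped Classical in
/-- The block `α_m` of indices `j` whose eigenvalue `λ_j(X)` equals `λ_i(X)`. -/
noncomputable def blockSet {n : ℕ} (X : Matrix (Fin n) (Fin n) ℝ) (i : Fin n) :
    Finset (Fin n) :=
  Finset.univ.filter fun j => eigval X j = eigval X i

lemma mem_blockSet_self {n : ℕ} (X : Matrix (Fin n) (Fin n) ℝ) (i : Fin n) :
    i ∈ blockSet X i := by
  simp [blockSet]

/-- The increasing enumeration of the block of `i`. -/
noncomputable def blockEmb {n : ℕ} (X : Matrix (Fin n) (Fin n) ℝ) (i : Fin n) :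
    Fin (blockSet X i).card → Fin n :=
  fun a => ((blockSet X i).orderIsoOfFin rfl a : Fin n)

/-- The position of `i` inside its own block. -/
noncomputable def blockIdx {n : ℕ} (X : Matrix (Fin n) (Fin n) ℝ) (i : Fin n) :
    Fin (blockSet X i).card :=
  ((blockSet X i).orderIsoOfFin rfl).symm ⟨i, mem_blockSet_self X i⟩

/-- The principal submatrix of `M` corresponding to the block of `i` (for `X`). -/
noncomputable def blockMat {n : ℕ} (X M : Matrix (Fin n) (Fin n) ℝ) (i : Fin n) :
    Matrix (Fin (blockSet X i).card) (Fin (blockSet X i).card) ℝ :=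
  Matrix.of fun a b => M (blockEmb X i a) (blockEmb X i b)

/-- The directional derivative `λ'(X;H)` of the ordered eigenvalue map, computed through
`U ∈ Oⁿ(X)`: blockwise ordered eigenvalues of `U_{α_m}ᵀ H U_{α_m}`. -/
noncomputable def lambdaDir {n : ℕ} (X U H : Matrix (Fin n) (Fin n) ℝ) : Fin n → ℝ :=
  fun i => eigval (blockMat X (Uᵀ * H * U) i) (blockIdx X i)

open scoped Classical in
/-- The Moore–Penrose pseudoinverse of a square real matrix, characterized by the four
Penrose equations. -/
noncomputable def pinv {n : ℕ} (A : Matrix (Fin n) (Fin n) ℝ) :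
    Matrix (Fin n) (Fin n) ℝ :=
  if h : ∃ B : Matrix (Fin n) (Fin n) ℝ,
      A * B * A = A ∧ B * A * B = B ∧ (A * B)ᵀ = A * B ∧ (B * A)ᵀ = B * A
  then h.choose else 0

/-- The curvature term `2 ∑ₘ ⟨Diag(y)_{αₘαₘ}, U_{αₘ}ᵀ H (μₘ I - X)† H U_{αₘ}⟩`, written as a
single sum over all indices. -/
noncomputable def curvTerm {n : ℕ} (X U H : Matrix (Fin n) (Fin n) ℝ) (y : Fin n → ℝ) : ℝ :=
  2 * ∑ i : Fin n, y i *
    (Uᵀ * (H * pinv (eigval X i • (1 : Matrix (Fin n) (Fin n) ℝ) - X) * H) * U) i i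

/-- Two symmetric matrices admit a simultaneous ordered spectral decomposition. -/
def simOrdSpec {k : ℕ} (A B : Matrix (Fin k) (Fin k) ℝ) : Prop :=
  ∃ P : Matrix (Fin k) (Fin k) ℝ, P * Pᵀ = 1 ∧
    A = P * Matrix.diagonal (eigval A) * Pᵀ ∧
    B = P * Matrix.diagonal (eigval B) * Pᵀ

/-- The subspace of symmetric `n × n` real matrices. -/
def symSubmodule (n : ℕ) : Submodule ℝ (Matrix (Fin n) (Fin n) ℝ) where
  carrier := {A | A.IsSymm}
  add_mem' := by
    intro a b ha hb
    simp only [Set.mem_setOf_eq, Matrix.IsSymm] at *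
    rw [Matrix.transpose_add, ha, hb]
  zero_mem' := by
    simp only [Set.mem_setOf_eq, Matrix.IsSymm, Matrix.transpose_zero]
  smul_mem' := by
    intro c a ha
    simp only [Set.mem_setOf_eq, Matrix.IsSymm] at *
    rw [Matrix.transpose_smul, ha]

/-- The space `Sⁿ` of symmetric `n × n` real matrices. -/
abbrev Sym (n : ℕ) : Type := ↥(symSubmodule n)

/-- The trace inner product `⟨A, B⟩ = tr(AB)` on `Sⁿ`. -/
noncomputable def ipM {n : ℕ} (A B : Sym n) : ℝ :=
  ((A : Matrix (Fin n) (Fin n) ℝ) * (B : Matrix (Fin n) (Fin n) ℝ)).trace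

/-- The Euclidean inner product on `ℝⁿ`. -/
def ipV {n : ℕ} (v w : Fin n → ℝ) : ℝ :=
  ∑ i, v i * w i

/-- The spectral function `g = θ ∘ λ` on `Sⁿ`. -/
noncomputable def specFn {n : ℕ} (θ : (Fin n → ℝ) → EReal) : Sym n → EReal :=
  fun A => θ (eigval (A : Matrix (Fin n) (Fin n) ℝ))

/-- A function on `ℝⁿ` is symmetric (permutation invariant). -/
def SymmetricFn {n : ℕ} {α : Type*} (θ : (Fin n → ℝ) → α) : Prop :=
  ∀ (x : Fin n → ℝ) (σ : Equiv.Perm (Fin n)), θ (fun i => x (σ i)) = θ x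

/-- The diagonal matrix `Diag(w)` as an element of `Sⁿ`. -/
noncomputable def diagSym {n : ℕ} (w : Fin n → ℝ) : Sym n :=
  ⟨Matrix.diagonal w, Matrix.isSymm_diagonal w⟩

/-- The `i`-th order statistic: `orderStat x i` is the `i`-th largest entry of `x`. -/
noncomputable def orderStat {n : ℕ} (x : Fin n → ℝ) : Fin n → ℝ :=
  fun i => x (Tuple.sort (fun j => -x j) i)

/-!
Ordered eigenvalues are `1`-Lipschitz for the operator norm (Weyl), and they are directionally
differentiable. For the latter, diagonalize `X` as `L = Diag(λ)` and conjugate `L + tK` by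
`exp(tS)`, where the skew-symmetric `S` solves `K + SL - LS = D`, the part of `K` that is
block diagonal along the eigenspaces of `L`. Up to `o(t)` this replaces `K` by `D`, and for small
`t > 0` the ordered eigenvalues of `L + tD` are exactly those of `L` plus `t` times the ordered
eigenvalues of the blocks. By Lipschitz continuity the difference quotients of `λ` at `X` converge
to `λ'(X;H)` even when the direction varies, so every difference quotient of `θ ∘ λ` at `X` is one
of `θ` at `λ(X)` in a nearby direction. Conversely, with `V` diagonalizing `X + tH`, the matrix
`V Diag(λ(X) + tw) Vᵀ` has the form `X + tH'` with `H' → H` as `w → λ'(X;H)`, and symmetry of `θ`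
gives `θ(λ(X + tH')) = θ(λ(X) + tw)`.
-/

section Subderivative

variable {E F : Type*} [TopologicalSpace E] [TopologicalSpace F]

lemma eventually_fst_pos (w : E) : ∀ᶠ p : ℝ × E in 𝓝[>] 0 ×ˢ 𝓝 w, 0 < p.1 :=
  tendsto_fst.eventually self_mem_nhdsWithin

variable [AddCommGroup E] [Module ℝ E] [AddCommGroup F] [Module ℝ F]

lemma subderiv_le_subderiv_of_tendsto {f : E → EReal} {g : F → EReal} {x w : E} {y v : F}
    (ψ : ℝ × F → E) (hψ : Tendsto ψ (𝓝[>] 0 ×ˢ 𝓝 v) (𝓝 w)) (hxy : g y = f x)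
    (hgf : ∀ p : ℝ × F, 0 < p.1 → g (y + p.1 • p.2) = f (x + p.1 • ψ p)) :
    subderiv f x w ≤ subderiv g y v := by
  refine (tendsto_fst.prodMk hψ).liminf_le_liminf_comp.trans (liminf_congr ?_).le
  filter_upwards [eventually_fst_pos v] with p hp
  simp only [Function.comp_apply, hgf p hp, hxy]

end Subderivative

section QuadraticForm

variable {m n : Type*} [Fintype m] [Fintype n]

lemma dotProduct_conj_diagonal_mulVec [DecidableEq n] {R : Type*} [CommSemiring R]
    (P : Matrix m n R) (a : n → R) (x : m → R) :
    x ⬝ᵥ ((P * diagonal a * Pᵀ) *ᵥ x) = ∑ j, a j * (Pᵀ *ᵥ x) j ^ 2 := by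
  rw [← mulVec_mulVec, ← mulVec_mulVec, dotProduct_mulVec, ← mulVec_transpose]
  simp only [dotProduct, mulVec_diagonal]
  exact Finset.sum_congr rfl fun j _ => by ring

lemma sum_transpose_mulVec_sq [DecidableEq m] {R : Type*} [CommSemiring R] {P : Matrix m n R}
    (hP : P * Pᵀ = 1) (x : m → R) : ∑ j, (Pᵀ *ᵥ x) j ^ 2 = x ⬝ᵥ x := by
  classical
  simpa [hP] using (dotProduct_conj_diagonal_mulVec P 1 x).symm

variable [DecidableEq m] [DecidableEq n] {P : Matrix m n ℝ} {a : n → ℝ} {c : ℝ} {x : m → ℝ}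

lemma mul_dotProduct_self_le_of_forall_le (hP : P * Pᵀ = 1)
    (h : ∀ j, (Pᵀ *ᵥ x) j ≠ 0 → c ≤ a j) :
    c * (x ⬝ᵥ x) ≤ x ⬝ᵥ ((P * diagonal a * Pᵀ) *ᵥ x) := by
  rw [dotProduct_conj_diagonal_mulVec, ← sum_transpose_mulVec_sq hP, Finset.mul_sum]
  refine Finset.sum_le_sum fun j _ => ?_
  by_cases hj : (Pᵀ *ᵥ x) j = 0
  · simp [hj]
  · exact mul_le_mul_of_nonneg_right (h j hj) (sq_nonneg _)

lemma le_mul_dotProduct_self_of_forall_le (hP : P * Pᵀ = 1)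
    (h : ∀ j, (Pᵀ *ᵥ x) j ≠ 0 → a j ≤ c) :
    x ⬝ᵥ ((P * diagonal a * Pᵀ) *ᵥ x) ≤ c * (x ⬝ᵥ x) := by
  rw [dotProduct_conj_diagonal_mulVec, ← sum_transpose_mulVec_sq hP, Finset.mul_sum]
  refine Finset.sum_le_sum fun j _ => ?_
  by_cases hj : (Pᵀ *ᵥ x) j = 0
  · simp [hj]
  · exact mul_le_mul_of_nonneg_right (h j hj) (sq_nonneg _)

end QuadraticForm

section OrderedQuadraticForm

variable {n : Type*} [Fintype n] [LinearOrder n]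

lemma exists_ne_zero_mulVec_eq_zero_of_lt_of_gt {K : Type*} [Field K]
    (A B : Matrix n n K) (i : n) :
    ∃ x : n → K, x ≠ 0 ∧ (∀ j, i < j → (A *ᵥ x) j = 0) ∧ ∀ j, j < i → (B *ᵥ x) j = 0 := by
  let f : (n → K) →ₗ[K] ({j : n // j ≠ i} → K) :=
    LinearMap.pi fun j => LinearMap.proj j.1 ∘ₗ (if i < j.1 then A else B).mulVecLin
  have hker : LinearMap.ker f ≠ ⊥ := by
    apply LinearMap.ker_ne_bot_of_finrank_lt
    simpa only [Module.finrank_fintype_fun_eq_card] using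
      Fintype.card_subtype_lt (p := (· ≠ i)) (x := i) (by simp)
  obtain ⟨x, hx, hx0⟩ := (Submodule.ne_bot_iff _).mp hker
  have hfx (j : n) (hj : j ≠ i) : ((if i < j then A else B) *ᵥ x) j = 0 :=
    congrFun (LinearMap.mem_ker.mp hx) ⟨j, hj⟩
  refine ⟨x, hx0, fun j hj => ?_, fun j hj => ?_⟩
  · simpa only [if_pos hj] using hfx j hj.ne'
  · simpa only [if_neg hj.not_gt] using hfx j hj.ne

lemma le_of_forall_dotProduct_conj_diagonal_le {P Q : Matrix n n ℝ}
    (hP : P * Pᵀ = 1) (hQ : Q * Qᵀ = 1) {a b : n → ℝ} (ha : Antitone a) (hb : Antitone b)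
    (h : ∀ x, x ⬝ᵥ ((P * diagonal a * Pᵀ) *ᵥ x) ≤ x ⬝ᵥ ((Q * diagonal b * Qᵀ) *ᵥ x)) :
    a ≤ b := by
  intro i
  obtain ⟨x, hx0, hPx, hQx⟩ := exists_ne_zero_mulVec_eq_zero_of_lt_of_gt Pᵀ Qᵀ i
  have hpos : 0 < x ⬝ᵥ x := by simpa using dotProduct_star_self_pos_iff.mpr hx0
  refine le_of_mul_le_mul_right ?_ hpos
  calc a i * (x ⬝ᵥ x)
      ≤ x ⬝ᵥ ((P * diagonal a * Pᵀ) *ᵥ x) :=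
        mul_dotProduct_self_le_of_forall_le hP fun j hj => ha (not_lt.mp (hj ∘ hPx j))
    _ ≤ x ⬝ᵥ ((Q * diagonal b * Qᵀ) *ᵥ x) := h x
    _ ≤ b i * (x ⬝ᵥ x) :=
        le_mul_dotProduct_self_of_forall_le hQ fun j hj => hb (not_lt.mp (hj ∘ hQx j))

end OrderedQuadraticForm

section ConjDiagonal

variable {l m n R : Type*} [Fintype l] [Fintype n] [CommSemiring R]

lemma conj_diagonal_add [DecidableEq n] (P : Matrix m n R) (a b : n → R) :
    P * diagonal (a + b) * Pᵀ = P * diagonal a * Pᵀ + P * diagonal b * Pᵀ := by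
  rw [← Matrix.add_mul, ← Matrix.mul_add, diagonal_add]
  rfl

lemma conj_diagonal_smul [DecidableEq n] (P : Matrix m n R) (c : R) (a : n → R) :
    P * diagonal (c • a) * Pᵀ = c • (P * diagonal a * Pᵀ) := by
  rw [diagonal_smul, Matrix.mul_smul, Matrix.smul_mul]

lemma submatrix_conj_diagonal_comp [DecidableEq l] [DecidableEq n] (P : Matrix m n R)
    (v : n → R) (σ : l ≃ n) :
    P.submatrix id σ * diagonal (v ∘ σ) * (P.submatrix id σ)ᵀ = P * diagonal v * Pᵀ := by
  rw [← submatrix_diagonal_equiv, transpose_submatrix, submatrix_mul_equiv, submatrix_mul_equiv,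
    submatrix_id_id]

lemma submatrix_mul_transpose_self [DecidableEq m] {P : Matrix m n R} (hP : P * Pᵀ = 1)
    (σ : l ≃ n) : P.submatrix id σ * (P.submatrix id σ)ᵀ = 1 := by
  rw [transpose_submatrix, submatrix_mul_equiv, hP, submatrix_id_id]

lemma isSymm_mul_mul_transpose {A : Matrix n n R} (hA : A.IsSymm) (P : Matrix m n R) :
    (P * A * Pᵀ).IsSymm := by
  rw [IsSymm, transpose_mul, transpose_mul, transpose_transpose, hA, Matrix.mul_assoc]

end ConjDiagonal

section OrderedEigenvalues

variable {n : ℕ} {A B P : Matrix (Fin n) (Fin n) ℝ}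

lemma antitone_comp_sort_neg (v : Fin n → ℝ) : Antitone (v ∘ Tuple.sort (-v)) := fun _ _ hij =>
  neg_le_neg_iff.mp (Tuple.monotone_sort (-v) hij)

lemma eigval_antitone (A : Matrix (Fin n) (Fin n) ℝ) : Antitone (eigval A) := by
  unfold eigval
  split_ifs with h
  · exact antitone_comp_sort_neg h.eigenvalues
  · exact antitone_const

lemma eigOrth_nonempty (hA : A.IsSymm) : (eigOrth A).Nonempty := by
  have h : A.IsHermitian := isHermitian_iff_isSymm.mpr hA
  let W : Matrix (Fin n) (Fin n) ℝ := h.eigenvectorUnitary.1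
  have hW : W * Wᵀ = 1 := Unitary.mul_star_self_of_mem h.eigenvectorUnitary.2
  have hAW : A = W * diagonal h.eigenvalues * Wᵀ := h.spectral_theorem
  have heig : eigval A = h.eigenvalues ∘ Tuple.sort (-h.eigenvalues) := by
    unfold eigval
    rw [dif_pos h]
    rfl
  refine ⟨_, submatrix_mul_transpose_self hW (Tuple.sort (-h.eigenvalues)), ?_⟩
  rw [heig, submatrix_conj_diagonal_comp, ← hAW]

lemma eigval_le_eigval_of_forall_dotProduct_le (hA : A.IsSymm) (hB : B.IsSymm)
    (h : ∀ x, x ⬝ᵥ (A *ᵥ x) ≤ x ⬝ᵥ (B *ᵥ x)) : eigval A ≤ eigval B := by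
  obtain ⟨P, hP, hPA⟩ := eigOrth_nonempty hA
  obtain ⟨Q, hQ, hQB⟩ := eigOrth_nonempty hB
  exact le_of_forall_dotProduct_conj_diagonal_le hP hQ (eigval_antitone A) (eigval_antitone B)
    fun x => by rw [← hPA, ← hQB]; exact h x

lemma eigval_conj_diagonal_of_antitone (hP : P * Pᵀ = 1) {v : Fin n → ℝ} (hv : Antitone v) :
    eigval (P * diagonal v * Pᵀ) = v := by
  obtain ⟨Q, hQ, hQP⟩ := eigOrth_nonempty (isSymm_mul_mul_transpose (isSymm_diagonal v) P)
  have hanti := eigval_antitone (P * diagonal v * Pᵀ)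
  apply le_antisymm
  · exact le_of_forall_dotProduct_conj_diagonal_le hQ hP hanti hv fun x => by rw [← hQP]
  · exact le_of_forall_dotProduct_conj_diagonal_le hP hQ hv hanti fun x => by rw [← hQP]

lemma eigval_conj_diagonal (hP : P * Pᵀ = 1) (v : Fin n → ℝ) :
    eigval (P * diagonal v * Pᵀ) = v ∘ Tuple.sort (-v) := by
  rw [← submatrix_conj_diagonal_comp P v (Tuple.sort (-v))]
  exact eigval_conj_diagonal_of_antitone (submatrix_mul_transpose_self hP _)
    (antitone_comp_sort_neg v)

lemma SymmetricFn.apply_eigval_conj_diagonal {α : Type*} {θ : (Fin n → ℝ) → α}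
    (hθ : SymmetricFn θ) (hP : P * Pᵀ = 1) (v : Fin n → ℝ) :
    θ (eigval (P * diagonal v * Pᵀ)) = θ v := by
  rw [eigval_conj_diagonal hP]
  exact hθ v _

lemma eigval_conj (hA : A.IsSymm) (hP : P * Pᵀ = 1) : eigval (P * A * Pᵀ) = eigval A := by
  obtain ⟨Q, hQ, hQA⟩ := eigOrth_nonempty hA
  have hPQ : (P * Q) * (P * Q)ᵀ = 1 := by
    rw [transpose_mul, Matrix.mul_assoc, ← Matrix.mul_assoc Q, hQ, Matrix.one_mul, hP]
  calc eigval (P * A * Pᵀ)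
      = eigval ((P * Q) * diagonal (eigval A) * (P * Q)ᵀ) := by
        conv_lhs => rw [hQA]
        simp only [transpose_mul, Matrix.mul_assoc]
    _ = eigval A := eigval_conj_diagonal_of_antitone hPQ (eigval_antitone A)

lemma eigval_add_smul_one (hA : A.IsSymm) (c : ℝ) : eigval (A + c • 1) = eigval A + c • 1 := by
  obtain ⟨P, hP, hPA⟩ := eigOrth_nonempty hA
  have hdecomp : A + c • 1 = P * diagonal (eigval A + c • 1) * Pᵀ := by
    rw [conj_diagonal_add, conj_diagonal_smul, ← hPA, Pi.one_def, diagonal_one, Matrix.mul_one, hP]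
  have hanti : Antitone (eigval A + c • 1) := fun _ _ hij => by
    simpa using eigval_antitone A hij
  rw [hdecomp, eigval_conj_diagonal_of_antitone hP hanti]

end OrderedEigenvalues

section OperatorNorm

open scoped Matrix.Norms.L2Operator

lemma dotProduct_mulVec_self_le_norm_mul {m : Type*} [Fintype m] [DecidableEq m]
    (A : Matrix m m ℝ) (x : m → ℝ) : x ⬝ᵥ (A *ᵥ x) ≤ ‖A‖ * (x ⬝ᵥ x) := by
  set y : EuclideanSpace ℝ m := WithLp.toLp 2 x
  calc x ⬝ᵥ (A *ᵥ x) = inner ℝ y (toEuclideanCLM (𝕜 := ℝ) A y) :=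
        (inner_toEuclideanCLM A y y).symm
    _ ≤ ‖y‖ * ‖toEuclideanCLM (𝕜 := ℝ) A y‖ := real_inner_le_norm _ _
    _ ≤ ‖y‖ * (‖A‖ * ‖y‖) := by
        gcongr
        exact (toEuclideanCLM (𝕜 := ℝ) A).le_opNorm y
    _ = ‖A‖ * ‖y‖ ^ 2 := by ring
    _ = ‖A‖ * (x ⬝ᵥ x) := by
        rw [EuclideanSpace.real_norm_sq_eq]
        simp only [y, dotProduct, sq]

lemma norm_conj_diagonal {m : Type*} [Fintype m] [DecidableEq m] {P : Matrix m m ℝ}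
    (hP : P * Pᵀ = 1) (v : m → ℝ) : ‖P * diagonal v * Pᵀ‖ = ‖v‖ := by
  have hPu : P ∈ unitary (Matrix m m ℝ) := mem_unitaryGroup_iff.mpr hP
  rw [← conjTranspose_eq_transpose_of_trivial, ← star_eq_conjTranspose,
    CStarRing.norm_mul_mem_unitary _ (Unitary.star_mem hPu),
    CStarRing.norm_mem_unitary_mul _ hPu, l2_opNorm_diagonal]

variable {n : ℕ} {A B : Matrix (Fin n) (Fin n) ℝ}

lemma eigval_le_eigval_add_norm_sub (hA : A.IsSymm) (hB : B.IsSymm) (i : Fin n) :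
    eigval A i ≤ eigval B i + ‖A - B‖ := by
  suffices hle : eigval A ≤ eigval (B + ‖A - B‖ • 1) by
    simpa [eigval_add_smul_one hB] using hle i
  refine eigval_le_eigval_of_forall_dotProduct_le hA (hB.add (isSymm_one.smul _)) fun x => ?_
  have h := dotProduct_mulVec_self_le_norm_mul (A - B) x
  rw [sub_mulVec, dotProduct_sub] at h
  rw [add_mulVec, smul_mulVec, one_mulVec, dotProduct_add, dotProduct_smul, smul_eq_mul]
  linarith

lemma norm_eigval_sub_eigval_le (hA : A.IsSymm) (hB : B.IsSymm) :
    ‖eigval A - eigval B‖ ≤ ‖A - B‖ := by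
  refine (pi_norm_le_iff_of_nonneg (norm_nonneg _)).mpr fun i => abs_sub_le_iff.mpr ⟨?_, ?_⟩
  · linarith [eigval_le_eigval_add_norm_sub hA hB i]
  · linarith [eigval_le_eigval_add_norm_sub hB hA i, norm_sub_rev A B]

variable {α : Type*} {l : Filter α}

lemma tendsto_smul_eigval_sub_zero {c : α → ℝ} {A B : α → Matrix (Fin n) (Fin n) ℝ}
    (hA : ∀ a, (A a).IsSymm) (hB : ∀ a, (B a).IsSymm)
    (h : Tendsto (fun a => c a • (A a - B a)) l (𝓝 0)) :
    Tendsto (fun a => c a • (eigval (A a) - eigval (B a))) l (𝓝 0) := by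
  refine squeeze_zero_norm (fun a => ?_) (tendsto_zero_iff_norm_tendsto_zero.mp h)
  rw [norm_smul, norm_smul]
  gcongr
  exact norm_eigval_sub_eigval_le (hA a) (hB a)

lemma tendsto_conj_diagonal_zero {m : Type*} [Fintype m] [DecidableEq m]
    {P : α → Matrix m m ℝ} (hP : ∀ a, P a * (P a)ᵀ = 1) {v : α → m → ℝ}
    (hv : Tendsto v l (𝓝 0)) : Tendsto (fun a => P a * diagonal (v a) * (P a)ᵀ) l (𝓝 0) := by
  rw [tendsto_zero_iff_norm_tendsto_zero] at hv ⊢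
  simpa only [norm_conj_diagonal (hP _)] using hv

lemma hasDerivAt_exp_conj {R : Type*} [NormedRing R] [NormedAlgebra ℝ R] [CompleteSpace R]
    (a b s : R) :
    HasDerivAt (fun t : ℝ => NormedSpace.exp (t • s) * (a + t • b) * NormedSpace.exp (t • -s))
      (b + s * a - a * s) 0 := by
  have hexp (u : R) : HasDerivAt (fun t : ℝ => NormedSpace.exp (t • u)) u 0 := by
    simpa using hasDerivAt_exp_smul_const (𝕂 := ℝ) u (0 : ℝ)
  have haff : HasDerivAt (fun t : ℝ => a + t • b) b 0 := by
    simpa using ((hasDerivAt_id (0 : ℝ)).smul_const b).const_add a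
  refine (((hexp s).mul haff).mul (hexp (-s))).congr_deriv ?_
  simp only [Pi.mul_apply, zero_smul, NormedSpace.exp_zero, one_mul, mul_one, add_zero, mul_neg]
  abel

lemma tendsto_smul_exp_conj_sub {m : Type*} [Fintype m] [DecidableEq m] (L K S : Matrix m m ℝ) :
    Tendsto (fun t : ℝ => t⁻¹ • (NormedSpace.exp (t • S) * (L + t • K) * NormedSpace.exp (t • -S)
      - (L + t • (K + S * L - L * S)))) (𝓝[>] 0) (𝓝 0) := by
  have : CompleteSpace (Matrix m m ℝ) := FiniteDimensional.complete ℝ _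
  have hslope := (hasDerivAt_exp_conj L K S).tendsto_slope_zero_right.sub_const (K + S * L - L * S)
  rw [sub_self] at hslope
  refine hslope.congr' ?_
  filter_upwards [self_mem_nhdsWithin] with t ht
  simp only [zero_add, zero_smul, NormedSpace.exp_zero, one_mul, mul_one, add_zero]
  rw [← sub_sub, smul_sub _ _ (t • _), inv_smul_smul₀ (ne_of_gt ht)]

end OperatorNorm

section LevelBlockPart

variable {m : Type*} {lam : m → ℝ} {K : Matrix m m ℝ}

/-- The part of `K` that is block diagonal along the level sets of `lam`. -/
def levelBlockPart (lam : m → ℝ) (K : Matrix m m ℝ) : Matrix m m ℝ :=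
  of fun j k => if lam j = lam k then K j k else 0

lemma levelBlockPart_isSymm (hK : K.IsSymm) : (levelBlockPart lam K).IsSymm :=
  IsSymm.ext fun j k => by simp only [levelBlockPart, of_apply, hK.apply j k, eq_comm]

lemma levelBlockPart_diagonal_add_smul [DecidableEq m] (t : ℝ) :
    levelBlockPart lam (diagonal lam + t • K) = diagonal lam + t • levelBlockPart lam K := by
  ext j k
  by_cases hjk : lam j = lam k
  · simp [levelBlockPart, hjk]
  · simp [levelBlockPart, hjk, diagonal_apply_ne _ fun h : j = k => hjk (congrArg lam h)]

/-- The skew-symmetric solution `S` of `K + S L - L S = D`, where `L = Diag(lam)` and `D` is the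
level block part of `K`. Inside the level blocks division by zero makes the entries `0`. -/
def skewGenerator (lam : m → ℝ) (K : Matrix m m ℝ) : Matrix m m ℝ :=
  of fun j k => K j k / (lam j - lam k)

lemma skewGenerator_transpose (hK : K.IsSymm) :
    (skewGenerator lam K)ᵀ = -skewGenerator lam K := by
  ext j k
  rw [Matrix.neg_apply, transpose_apply, skewGenerator, of_apply, of_apply, hK.apply, ← div_neg,
    neg_sub]

lemma add_skewGenerator_mul_sub_mul_skewGenerator [Fintype m] [DecidableEq m]
    (lam : m → ℝ) (K : Matrix m m ℝ) :
    K + skewGenerator lam K * diagonal lam - diagonal lam * skewGenerator lam K =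
      levelBlockPart lam K := by
  ext j k
  simp only [skewGenerator, levelBlockPart, Matrix.sub_apply, Matrix.add_apply,
    mul_diagonal, diagonal_mul, of_apply]
  split_ifs with hjk
  · simp [hjk]
  · field_simp [sub_ne_zero.mpr hjk]
    ring

end LevelBlockPart

section SkewExponential

variable {m : Type*} [Fintype m] [DecidableEq m] {S : Matrix m m ℝ}

lemma exp_smul_transpose (hS : Sᵀ = -S) (t : ℝ) :
    (NormedSpace.exp (t • S))ᵀ = NormedSpace.exp (t • -S) := by
  rw [← exp_transpose, transpose_smul, hS]

lemma exp_smul_mul_transpose_self (hS : Sᵀ = -S) (t : ℝ) :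
    NormedSpace.exp (t • S) * (NormedSpace.exp (t • S))ᵀ = 1 := by
  rw [exp_smul_transpose hS, smul_neg, ← exp_add_of_commute _ _ (Commute.refl (t • S)).neg_right,
    add_neg_cancel, NormedSpace.exp_zero]

end SkewExponential

lemma eventually_antitone_add_smul {ι : Type*} [Finite ι] [Preorder ι] {a b : ι → ℝ}
    (ha : Antitone a) (hb : ∀ ⦃i j⦄, i ≤ j → a i = a j → b j ≤ b i) :
    ∀ᶠ t in 𝓝[>] (0 : ℝ), Antitone (a + t • b) := by
  have hpair (i j : ι) (hij : i ≤ j) :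
      ∀ᶠ t in 𝓝[>] (0 : ℝ), a j + t * b j ≤ a i + t * b i := by
    rcases (ha hij).eq_or_lt with heq | hlt
    · filter_upwards [self_mem_nhdsWithin] with t ht
      rw [heq]
      gcongr
      · exact (Set.mem_Ioi.mp ht).le
      · exact hb hij heq.symm
    · have hcont (k : ι) : Tendsto (fun t : ℝ => a k + t * b k) (𝓝[>] 0) (𝓝 (a k)) :=
        tendsto_nhdsWithin_of_tendsto_nhds <|
          Continuous.tendsto' (by fun_prop) 0 (a k) (by simp)
      filter_upwards [(hcont j).eventually_lt (hcont i) hlt] with t ht using ht.le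
  filter_upwards [eventually_all.mpr fun i => eventually_all.mpr fun j =>
    eventually_all.mpr (hpair i j)] with t ht i j hij
  exact ht i j hij

section LevelBlocks

variable {n : ℕ} (lam : Fin n → ℝ) (K : Matrix (Fin n) (Fin n) ℝ)

/-- The level set `{i | lam i = μ}`; for `lam = λ(X)` these are the index blocks `α_m`. -/
def levelFinset (μ : ℝ) : Finset (Fin n) :=
  Finset.univ.filter fun j => lam j = μ

variable {lam} in
lemma mem_levelFinset {μ : ℝ} {i : Fin n} : i ∈ levelFinset lam μ ↔ lam i = μ := by
  simp [levelFinset]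

/-- The identification of an index `i` with the pair of its level `lam i` and its position in
the increasing enumeration of that level set. -/
def levelEquiv : Fin n ≃ Σ μ : Set.range lam, Fin (levelFinset lam μ).card where
  toFun i := ⟨⟨lam i, i, rfl⟩,
    ((levelFinset lam (lam i)).orderIsoOfFin rfl).symm ⟨i, mem_levelFinset.mpr rfl⟩⟩
  invFun p := (levelFinset lam p.1).orderIsoOfFin rfl p.2
  left_inv i := by simp
  right_inv := by
    refine Function.LeftInverse.rightInverse_of_surjective (fun i => by simp) ?_
    rintro ⟨⟨μ, hμ⟩, a⟩
    obtain ⟨⟨j, hj⟩, rfl⟩ := ((levelFinset lam μ).orderIsoOfFin rfl).symm.surjective a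
    obtain rfl := mem_levelFinset.mp hj
    exact ⟨j, rfl⟩

lemma apply_levelEquiv_symm (p : Σ μ : Set.range lam, Fin (levelFinset lam μ).card) :
    lam ((levelEquiv lam).symm p) = p.1 :=
  mem_levelFinset.mp ((levelFinset lam p.1).orderIsoOfFin rfl p.2).2

/-- The principal submatrix of `K` on the level set of `μ`. -/
def levelSubmatrix (μ : ℝ) :
    Matrix (Fin (levelFinset lam μ).card) (Fin (levelFinset lam μ).card) ℝ :=
  K.submatrix (fun a => (levelFinset lam μ).orderIsoOfFin rfl a)
    fun a => (levelFinset lam μ).orderIsoOfFin rfl a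

/-- The ordered eigenvalues of the principal submatrices of `K` on the level sets of `lam`,
placed at the positions of these level sets. -/
def levelEigval (i : Fin n) : ℝ :=
  eigval (levelSubmatrix lam K (lam i)) (levelEquiv lam i).2

lemma lambdaDir_eq_levelEigval (X U H : Matrix (Fin n) (Fin n) ℝ) :
    lambdaDir X U H = levelEigval (eigval X) (Uᵀ * H * U) :=
  rfl

lemma levelBlockPart_eq_submatrix_blockDiagonal' :
    levelBlockPart lam K =
      (blockDiagonal' fun μ : Set.range lam => levelSubmatrix lam K μ).submatrix
        (levelEquiv lam) (levelEquiv lam) := by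
  ext j k
  obtain ⟨⟨μ, a⟩, rfl⟩ := (levelEquiv lam).symm.surjective j
  obtain ⟨⟨ν, b⟩, rfl⟩ := (levelEquiv lam).symm.surjective k
  simp only [levelBlockPart, of_apply, submatrix_apply, Equiv.apply_symm_apply,
    apply_levelEquiv_symm, Subtype.coe_inj]
  by_cases hμν : μ = ν
  · subst hμν
    rw [if_pos rfl, blockDiagonal'_apply_eq]
    rfl
  · rw [if_neg hμν, blockDiagonal'_apply_ne _ _ _ hμν]

variable {lam K}

lemma levelSubmatrix_diagonal_add_smul (μ t : ℝ) :
    levelSubmatrix lam (diagonal lam + t • K) μ = μ • 1 + t • levelSubmatrix lam K μ := by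
  have hdiag : levelSubmatrix lam (diagonal lam) μ = μ • 1 := by
    have hval (a) : lam ((levelFinset lam μ).orderIsoOfFin rfl a) = μ :=
      mem_levelFinset.mp (Subtype.prop _)
    rw [smul_one_eq_diagonal]
    exact (submatrix_diagonal _ _ (Subtype.val_injective.comp (OrderIso.injective _))).trans
      (congrArg diagonal (funext hval))
  rw [← hdiag]
  rfl

lemma diagonal_add_smul_levelEigval (t : ℝ) :
    diagonal (lam + t • levelEigval lam K) =
      (blockDiagonal' fun μ : Set.range lam =>
        diagonal ((μ : ℝ) • 1 + t • eigval (levelSubmatrix lam K μ))).submatrix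
          (levelEquiv lam) (levelEquiv lam) := by
  rw [blockDiagonal'_diagonal, submatrix_diagonal_equiv]
  exact congrArg diagonal (funext fun i => congrArg₂ (· + ·) (mul_one (lam i)).symm rfl)

lemma exists_orthogonal_diagonal_add_smul_levelBlockPart (hK : K.IsSymm) :
    ∃ P : Matrix (Fin n) (Fin n) ℝ, P * Pᵀ = 1 ∧ ∀ t : ℝ,
      diagonal lam + t • levelBlockPart lam K =
        P * diagonal (lam + t • levelEigval lam K) * Pᵀ := by
  choose Q hQ hQK using fun μ : Set.range lam =>
    eigOrth_nonempty (A := levelSubmatrix lam K μ) (hK.submatrix _)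
  have hblock (t : ℝ) (μ : Set.range lam) : levelSubmatrix lam (diagonal lam + t • K) μ =
      Q μ * diagonal ((μ : ℝ) • 1 + t • eigval (levelSubmatrix lam K μ)) * (Q μ)ᵀ := by
    rw [levelSubmatrix_diagonal_add_smul, conj_diagonal_add, conj_diagonal_smul,
      conj_diagonal_smul, ← hQK, Pi.one_def, diagonal_one, Matrix.mul_one, hQ]
  refine ⟨(blockDiagonal' Q).submatrix (levelEquiv lam) (levelEquiv lam), ?_, fun t => ?_⟩
  · rw [transpose_submatrix, submatrix_mul_equiv, blockDiagonal'_transpose, ← blockDiagonal'_mul,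
      show (fun μ => Q μ * (Q μ)ᵀ) = 1 from funext hQ, blockDiagonal'_one, submatrix_one_equiv]
  · rw [← levelBlockPart_diagonal_add_smul, levelBlockPart_eq_submatrix_blockDiagonal',
      diagonal_add_smul_levelEigval, transpose_submatrix, submatrix_mul_equiv,
      submatrix_mul_equiv, blockDiagonal'_transpose, ← blockDiagonal'_mul, ← blockDiagonal'_mul]
    simp only [hblock]

lemma levelEigval_eq_of_apply_eq {μ : ℝ} {i : Fin n} (h : lam i = μ) :
    levelEigval lam K i = eigval (levelSubmatrix lam K μ)
      (((levelFinset lam μ).orderIsoOfFin rfl).symm ⟨i, mem_levelFinset.mpr h⟩) := by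
  subst h
  rfl

lemma levelEigval_le_of_le_of_eq {i j : Fin n} (hij : i ≤ j) (h : lam i = lam j) :
    levelEigval lam K j ≤ levelEigval lam K i := by
  rw [levelEigval_eq_of_apply_eq h, levelEigval_eq_of_apply_eq (rfl : lam j = lam j)]
  exact eigval_antitone _ (OrderIso.monotone _ hij)

lemma eventually_eigval_diagonal_add_smul_levelBlockPart (hlam : Antitone lam) (hK : K.IsSymm) :
    ∀ᶠ t in 𝓝[>] (0 : ℝ), eigval (diagonal lam + t • levelBlockPart lam K) =
      lam + t • levelEigval lam K := by
  obtain ⟨P, hP, hdecomp⟩ := exists_orthogonal_diagonal_add_smul_levelBlockPart hK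
  filter_upwards [eventually_antitone_add_smul hlam fun _ _ => levelEigval_le_of_le_of_eq]
    with t ht
  rw [hdecomp t, eigval_conj_diagonal_of_antitone hP ht]

end LevelBlocks

section DirectionalDerivative

variable {n : ℕ} {lam : Fin n → ℝ} {K : Matrix (Fin n) (Fin n) ℝ}

lemma tendsto_slope_eigval_diagonal (hlam : Antitone lam) (hK : K.IsSymm) :
    Tendsto (fun t : ℝ => t⁻¹ • (eigval (diagonal lam + t • K) - lam)) (𝓝[>] 0)
      (𝓝 (levelEigval lam K)) := by
  have hS : (skewGenerator lam K)ᵀ = -skewGenerator lam K := skewGenerator_transpose hK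
  have hL (t : ℝ) : (diagonal lam + t • K).IsSymm := (isSymm_diagonal lam).add (hK.smul t)
  have hD (t : ℝ) : (diagonal lam + t • levelBlockPart lam K).IsSymm :=
    (isSymm_diagonal lam).add ((levelBlockPart_isSymm hK).smul t)
  have hconj := tendsto_smul_exp_conj_sub (diagonal lam) K (skewGenerator lam K)
  simp only [add_skewGenerator_mul_sub_mul_skewGenerator, ← exp_smul_transpose hS] at hconj
  have hsmall := (tendsto_smul_eigval_sub_zero
    (fun t => isSymm_mul_mul_transpose (hL t) _) hD hconj).add_const (levelEigval lam K)
  rw [zero_add] at hsmall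
  refine hsmall.congr' ?_
  filter_upwards [eventually_eigval_diagonal_add_smul_levelBlockPart hlam hK, self_mem_nhdsWithin]
    with t ht htpos
  rw [eigval_conj (hL t) (exp_smul_mul_transpose_self hS t), ht, ← sub_sub, smul_sub _ _ (t • _),
    inv_smul_smul₀ (ne_of_gt htpos), sub_add_cancel]

variable {X U H : Matrix (Fin n) (Fin n) ℝ}

lemma tendsto_slope_eigval (hU : U ∈ eigOrth X) (hH : H.IsSymm) :
    Tendsto (fun t : ℝ => t⁻¹ • (eigval (X + t • H) - eigval X)) (𝓝[>] 0)
      (𝓝 (lambdaDir X U H)) := by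
  obtain ⟨hUU, hX⟩ := hU
  have hK : (Uᵀ * H * U).IsSymm := by
    simpa only [transpose_transpose] using isSymm_mul_mul_transpose hH Uᵀ
  have hconj (t : ℝ) : X + t • H = U * (diagonal (eigval X) + t • (Uᵀ * H * U)) * Uᵀ := by
    conv_lhs => rw [hX, ← Matrix.one_mul H, ← Matrix.mul_one (1 * H), ← hUU]
    noncomm_ring
  have heig (t : ℝ) : eigval (X + t • H) = eigval (diagonal (eigval X) + t • (Uᵀ * H * U)) := by
    rw [hconj, eigval_conj ((isSymm_diagonal _).add (hK.smul t)) hUU]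
  rw [lambdaDir_eq_levelEigval]
  simpa only [heig] using tendsto_slope_eigval_diagonal (eigval_antitone X) hK

end DirectionalDerivative

section Spectral

variable {n : ℕ} {X : Sym n} {U : Matrix (Fin n) (Fin n) ℝ}

lemma tendsto_slope_eigval_prod (hU : U ∈ eigOrth X.val) (H : Sym n) :
    Tendsto (fun p : ℝ × Sym n => p.1⁻¹ • (eigval (X + p.1 • p.2).val - eigval X.val))
      (𝓝[>] 0 ×ˢ 𝓝 H) (𝓝 (lambdaDir X.val U H.val)) := by
  have hdir : Tendsto (fun p : ℝ × Sym n => p.2.val - H.val) (𝓝[>] 0 ×ˢ 𝓝 H) (𝓝 0) := by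
    have h := (continuous_subtype_val.tendsto H).comp (tendsto_snd (f := 𝓝[>] (0 : ℝ)))
    simpa using h.sub_const H.val
  have hmat : Tendsto (fun p : ℝ × Sym n =>
      p.1⁻¹ • ((X + p.1 • p.2).val - (X + p.1 • H).val)) (𝓝[>] 0 ×ˢ 𝓝 H) (𝓝 0) := by
    refine hdir.congr' ?_
    filter_upwards [eventually_fst_pos H] with p hp
    simp [← smul_sub, hp.ne']
  have hperturb := tendsto_smul_eigval_sub_zero (fun p : ℝ × Sym n => (X + p.1 • p.2).2)
    (fun p => (X + p.1 • H).2) hmat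
  have hslope := (tendsto_slope_eigval hU H.2).comp (tendsto_fst (g := 𝓝 H))
  simpa [← smul_add] using hperturb.add hslope

lemma exists_lift_eigval (hU : U ∈ eigOrth X.val) (H : Sym n) :
    ∃ F : ℝ × (Fin n → ℝ) → Sym n,
      Tendsto F (𝓝[>] 0 ×ˢ 𝓝 (lambdaDir X.val U H.val)) (𝓝 H) ∧
      ∀ p, 0 < p.1 → ∃ V : Matrix (Fin n) (Fin n) ℝ, V * Vᵀ = 1 ∧
        (X + p.1 • F p).val = V * diagonal (eigval X.val + p.1 • p.2) * Vᵀ := by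
  choose V hV hVX using fun t : ℝ => eigOrth_nonempty (X + t • H).2
  let d (p : ℝ × (Fin n → ℝ)) : Fin n → ℝ :=
    p.2 - p.1⁻¹ • (eigval (X + p.1 • H).val - eigval X.val)
  let E (p : ℝ × (Fin n → ℝ)) : Sym n :=
    ⟨V p.1 * diagonal (d p) * (V p.1)ᵀ, isSymm_mul_mul_transpose (isSymm_diagonal _) _⟩
  have hd : Tendsto d (𝓝[>] 0 ×ˢ 𝓝 (lambdaDir X.val U H.val)) (𝓝 0) := by
    rw [← sub_self (lambdaDir X.val U H.val)]
    exact tendsto_snd.sub ((tendsto_slope_eigval hU H.2).comp tendsto_fst)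
  have hE : Tendsto E (𝓝[>] 0 ×ˢ 𝓝 (lambdaDir X.val U H.val)) (𝓝 0) :=
    tendsto_subtype_rng.mpr (tendsto_conj_diagonal_zero (fun p => hV p.1) hd)
  refine ⟨fun p => H + E p, by simpa using hE.const_add H, fun p hp => ⟨V p.1, hV p.1, ?_⟩⟩
  have hdiag : eigval X.val + p.1 • p.2 = eigval (X + p.1 • H).val + p.1 • d p := by
    simp only [d, smul_sub, smul_inv_smul₀ hp.ne']
    abel
  rw [hdiag, conj_diagonal_add, conj_diagonal_smul, ← hVX, smul_add, ← add_assoc]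
  rfl

theorem subderiv_spectral_general (θ : (Fin n → ℝ) → EReal) (hsym : SymmetricFn θ)
    (_hfin : IsFiniteAt θ (eigval X.val)) (hU : U ∈ eigOrth X.val) (H : Sym n) :
    subderiv (specFn θ) X H = subderiv θ (eigval X.val) (lambdaDir X.val U H.val) := by
  obtain ⟨F, hF, hFV⟩ := exists_lift_eigval hU H
  apply le_antisymm
  · refine subderiv_le_subderiv_of_tendsto F hF rfl fun p hp => ?_
    obtain ⟨V, hV, hXF⟩ := hFV p hp
    rw [specFn, hXF, hsym.apply_eigval_conj_diagonal hV]
  · refine subderiv_le_subderiv_of_tendsto _ (tendsto_slope_eigval_prod hU H) rfl fun p hp => ?_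
    rw [smul_inv_smul₀ hp.ne', add_sub_cancel, specFn]

end Spectral

/-- Theorem 2.3: the subderivative of a spectral function `g = θ ∘ λ` at `X`
is `dθ(λ(X))` applied to `λ'(X;H)`. -/
theorem subderiv_spectral {n : ℕ} (θ : (Fin n → ℝ) → EReal) (X : Sym n)
    (hsym : SymmetricFn θ) (hlsc : LowerSemicontinuous θ)
    (hreg : ∀ x : Fin n → ℝ, θ x ≠ ⊤ → SubdiffRegularAt ipV θ x)
    (hfin : IsFiniteAt θ (eigval X.val))
    (hne : ∃ y : Fin n → ℝ, LimSubgrad ipV θ (eigval X.val) y) :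
    ∀ U ∈ eigOrth X.val, ∀ H : Sym n,
      subderiv (specFn θ) X H =
        subderiv θ (eigval X.val) (lambdaDir X.val U H.val) := by
  exact fun _ hU H => subderiv_spectral_general θ hsym hfin hU H

end SpecPaper
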